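/- arXiv:2604.22752 — 8 statements merged into one kernel-verified Lean document; each statement's English description precedes it below -/
import Mathlib

section
/- Let Ω be a measurable space, B a probability measure on Ω, d a natural number, t : Ω → (Fin d → ℝ) a measurable map, and η ∈ (Fin d → ℝ). Assume the function x ↦ exp(⟨η, t(x)⟩) is integrable with respect to B and its integral Z = ∫ exp(⟨η, t(x)⟩) dB(x) is positive, and let P be the probability measure with density x ↦ exp(⟨η, t(x)⟩)/Z with respect to B (the exponential family member with base B, canonical statistic t and canonical parameter η). Suppose t is integrable with respect to P. If Q is any probability measure on Ω that is absolutely continuous with respect to B, such that t is integrable with respect to Q and ∫ t dQ = ∫ t dP, then KL(P‖B) ≤ KL(Q‖B). -/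
open MeasureTheory Real
open scoped Classical

/-- Kullback–Leibler divergence of `Q` with respect to `P`:
`∫ log(dQ/dP) dQ` if `Q ≪ P` and the integrand is `Q`-integrable, `+∞` otherwise. -/
noncomputable def klDiv {Ω : Type*} [MeasurableSpace Ω] (Q P : Measure Ω) : EReal :=
  if Q ≪ P ∧ Integrable (fun x => Real.log (Q.rnDeriv P x).toReal) Q
    then ((∫ x, Real.log (Q.rnDeriv P x).toReal ∂Q : ℝ) : EReal)
    else ⊤

/-- The exponential family member `P` with base `B`, canonical statistic `t` and canonical
parameter `η` maximises entropy with prior measure `B` (i.e. minimises `klDiv · B`) among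
all probability measures `Q ≪ B` with the prescribed expectation of `t`. -/
theorem expFamily_maximises_entropy_with_prior
    {Ω : Type*} [MeasurableSpace Ω] (B : Measure Ω) [IsProbabilityMeasure B]
    (d : ℕ) (t : Ω → (Fin d → ℝ)) (ht : Measurable t) (η : Fin d → ℝ)
    (hint : Integrable (fun x => Real.exp (∑ i, η i * t x i)) B)
    (Z : ℝ) (hZ : Z = ∫ x, Real.exp (∑ i, η i * t x i) ∂B) (hZpos : 0 < Z)
    (P : Measure Ω)
    (hP : P = B.withDensity (fun x => ENNReal.ofReal (Real.exp (∑ i, η i * t x i) / Z)))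
    (hPprob : IsProbabilityMeasure P)
    (htP : Integrable t P)
    (Q : Measure Ω) [IsProbabilityMeasure Q] (hQB : Q ≪ B)
    (htQ : Integrable t Q)
    (hmean : ∫ x, t x ∂Q = ∫ x, t x ∂P) :
    klDiv P B ≤ klDiv Q B := by
  set f : Ω → ℝ := fun x => ∑ i, η i * t x i with hf
  have hPt : P = B.tilted f := by rw [hP, hZ]; rfl
  have hPB : P ≪ B := by rw [hPt]; exact tilted_absolutelyContinuous B f
  have hBP : B ≪ P := by rw [hPt]; exact absolutelyContinuous_tilted hint
  have key : ∀ ν : Measure Ω, Integrable t ν →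
      Integrable f ν ∧ ∫ x, f x ∂ν = ∑ i, η i * (∫ x, t x ∂ν) i := by
    intro ν hR
    have hi : ∀ i, Integrable (fun x => t x i) ν := fun i => Integrable.eval hR i
    refine ⟨integrable_finsetSum _ fun i _ => (hi i).const_mul _, ?_⟩
    rw [hf, integral_finsetSum _ fun i _ => (hi i).const_mul _]
    refine Finset.sum_congr rfl fun i _ => ?_
    rw [integral_const_mul, eval_integral hi]
  obtain ⟨hfP, hfP'⟩ := key P htP
  obtain ⟨hfQ, hfQ'⟩ := key Q htQ
  have hlog : (fun x => Real.log (P.rnDeriv B x).toReal) =ᵐ[P] fun x => f x - Real.log Z := by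
    refine hPB.ae_le ?_
    rw [hPt, hZ]
    exact log_rnDeriv_tilted_left_self hint
  have hlogi : Integrable (fun x => Real.log (P.rnDeriv B x).toReal) P := by
    rw [integrable_congr hlog]
    exact hfP.sub (integrable_const _)
  unfold klDiv
  rw [if_pos ⟨hPB, hlogi⟩]
  split_ifs with h
  · have hQi : Integrable (llr Q B) Q := h.2
    have e1 := integral_llr_tilted_right hQB hfQ hint hQi
    have hQP : Q ≪ B.tilted f := by rw [← hPt]; exact hQB.trans hBP
    have hPp : IsProbabilityMeasure (B.tilted f) := by rw [← hPt]; exact hPprob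
    have e2 := InformationTheory.integral_llr_add_sub_measure_univ_nonneg hQP
      (integrable_llr_tilted_right hQB hfQ hQi hint)
    have e3 : ∫ x, Real.log (P.rnDeriv B x).toReal ∂P = ∫ x, f x ∂P - Real.log Z := by
      rw [integral_congr_ae hlog, integral_sub hfP (integrable_const _)]
      simp
    have hZ' : ∫ x, Real.exp (f x) ∂B = Z := hZ.symm
    have e4 : ∫ x, llr Q B x ∂Q = ∫ x, Real.log (Q.rnDeriv B x).toReal ∂Q := rfl
    have e5 : ∫ x, f x ∂Q = ∫ x, f x ∂P := by rw [hfP', hfQ', hmean]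
    simp only [probReal_univ] at e2
    rw [hZ'] at e1
    rw [EReal.coe_le_coe_iff]
    linarith
  · exact le_top
end

section
/- Let Ω be a measurable space, B a probability measure on Ω, d a natural number, t : Ω → (Fin d → ℝ) a measurable map, and η ∈ (Fin d → ℝ). Assume x ↦ exp(⟨η, t(x)⟩) is integrable with respect to B with positive integral Z, and let P be the probability measure with density x ↦ exp(⟨η, t(x)⟩)/Z with respect to B; suppose t is integrable with respect to P. Let Q be a probability measure on Ω with Q ≪ B, t integrable with respect to Q, ∫ t dQ = ∫ t dP, and KL(Q‖B) < ∞. If KL(Q‖B) = KL(P‖B), then Q = P. -/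
open MeasureTheory Real
open scoped Classical

/-- Uniqueness in the maximum-entropy characterisation: if a probability measure `Q ≪ B`
satisfies the moment constraint and achieves the same (finite) entropy with prior
measure `B` as the exponential family member `P`, then `Q = P`. -/
theorem expFamily_maximises_entropy_with_prior_unique
    {Ω : Type*} [MeasurableSpace Ω] (B : Measure Ω) [IsProbabilityMeasure B]
    (d : ℕ) (t : Ω → (Fin d → ℝ)) (ht : Measurable t) (η : Fin d → ℝ)
    (hint : Integrable (fun x => Real.exp (∑ i, η i * t x i)) B)
    (Z : ℝ) (hZ : Z = ∫ x, Real.exp (∑ i, η i * t x i) ∂B) (hZpos : 0 < Z)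
    (P : Measure Ω)
    (hP : P = B.withDensity (fun x => ENNReal.ofReal (Real.exp (∑ i, η i * t x i) / Z)))
    (hPprob : IsProbabilityMeasure P)
    (htP : Integrable t P)
    (Q : Measure Ω) [IsProbabilityMeasure Q] (hQB : Q ≪ B)
    (htQ : Integrable t Q)
    (hmean : ∫ x, t x ∂Q = ∫ x, t x ∂P)
    (hfin : klDiv Q B < ⊤)
    (heq : klDiv Q B = klDiv P B) :
    Q = P := by
  set f : Ω → ℝ := fun x => ∑ i, η i * t x i with hf
  have hPt : P = B.tilted f := by rw [hP, hZ]; rfl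
  have hfm : Measurable f := by fun_prop
  have hiQ : ∀ i, Integrable (fun x => t x i) Q := fun i => htQ.eval i
  have hiP : ∀ i, Integrable (fun x => t x i) P := fun i => htP.eval i
  have hfQ : Integrable f Q := integrable_finsetSum _ fun i _ => (hiQ i).const_mul _
  have hfP : Integrable f P := integrable_finsetSum _ fun i _ => (hiP i).const_mul _
  have hfeq : ∫ x, f x ∂Q = ∫ x, f x ∂P := by
    simp only [hf]
    rw [integral_finsetSum _ fun i _ => (hiQ i).const_mul _,
      integral_finsetSum _ fun i _ => (hiP i).const_mul _]
    refine Finset.sum_congr rfl fun i _ => ?_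
    rw [integral_const_mul, integral_const_mul, ← eval_integral hiQ, ← eval_integral hiP, hmean]
  have hPB : P ≪ B := hPt ▸ tilted_absolutelyContinuous B f
  have hBP : B ≪ P := hPt ▸ absolutelyContinuous_tilted hint
  have hQ : Q ≪ B ∧ Integrable (fun x => Real.log (Q.rnDeriv B x).toReal) Q := by
    by_contra h
    simp [klDiv, h] at hfin
  have hlogP : (fun x => Real.log (P.rnDeriv B x).toReal) =ᵐ[P]
      fun x => f x - Real.log (∫ x, Real.exp (f x) ∂B) := by
    apply hPB.ae_le
    rw [hPt]
    exact log_rnDeriv_tilted_left_self hint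
  have hPi : Integrable (fun x => Real.log (P.rnDeriv B x).toReal) P :=
    (integrable_congr hlogP).2 (hfP.sub (integrable_const _))
  rw [klDiv, klDiv, if_pos hQ, if_pos ⟨hPB, hPi⟩, EReal.coe_eq_coe_iff,
    integral_congr_ae hlogP, integral_sub hfP (integrable_const _)] at heq
  simp only [integral_const, probReal_univ, one_smul] at heq
  have key := integral_llr_tilted_right (μ := Q) (ν := B) (f := f) hQB hfQ hint hQ.2
  have hllr : Integrable (llr Q (B.tilted f)) Q :=
    integrable_llr_tilted_right hQB hfQ hQ.2 hint
  have h0 : ∫ x, llr Q P x ∂Q = 0 := by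
    rw [hPt, key]
    simp only [llr_def]
    rw [heq, hfeq]
    ring
  rw [← InformationTheory.klDiv_eq_zero_iff]
  have hne : InformationTheory.klDiv Q P ≠ ⊤ :=
    InformationTheory.klDiv_ne_top (hQB.trans hBP) (hPt ▸ hllr)
  have h1 := InformationTheory.toReal_klDiv_of_measure_eq (hQB.trans hBP)
    (by simp : Q Set.univ = P Set.univ)
  rw [h0] at h1
  exact ((ENNReal.toReal_eq_zero_iff _).1 h1).resolve_right hne
end

section
/- Let Ω be a measurable space, B a probability measure on Ω, d a natural number, t : Ω → (Fin d → ℝ) measurable, and η ∈ (Fin d → ℝ). Assume x ↦ exp(⟨η, t(x)⟩) is integrable with respect to B with positive integral Z, and let P be the probability measure with density x ↦ exp(⟨η, t(x)⟩)/Z with respect to B; suppose t is integrable with respect to P. Let Q be a probability measure with Q ≪ B, KL(Q‖B) < ∞, t integrable with respect to Q, and ∫ t dQ = ∫ t dP. Then KL(Q‖P) = KL(Q‖B) − KL(P‖B). -/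
open MeasureTheory Real
open scoped Classical

/-- The key identity in the maximum-entropy derivation of exponential families:
`KL(Q‖P) = KL(Q‖B) − KL(P‖B)` for any probability measure `Q ≪ B` with finite
`KL(Q‖B)` satisfying the moment constraint `∫ t dQ = ∫ t dP`. -/
theorem klDiv_expFamily_identity
    {Ω : Type*} [MeasurableSpace Ω] (B : Measure Ω) [IsProbabilityMeasure B]
    (d : ℕ) (t : Ω → (Fin d → ℝ)) (ht : Measurable t) (η : Fin d → ℝ)
    (hint : Integrable (fun x => Real.exp (∑ i, η i * t x i)) B)
    (Z : ℝ) (hZ : Z = ∫ x, Real.exp (∑ i, η i * t x i) ∂B) (hZpos : 0 < Z)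
    (P : Measure Ω)
    (hP : P = B.withDensity (fun x => ENNReal.ofReal (Real.exp (∑ i, η i * t x i) / Z)))
    (hPprob : IsProbabilityMeasure P)
    (htP : Integrable t P)
    (Q : Measure Ω) [IsProbabilityMeasure Q] (hQB : Q ≪ B)
    (hfin : klDiv Q B < ⊤)
    (htQ : Integrable t Q)
    (hmean : ∫ x, t x ∂Q = ∫ x, t x ∂P) :
    klDiv Q P = klDiv Q B - klDiv P B := by
  have hPt : P = B.tilted (fun x => ∑ i, η i * t x i) := by
    rw [hP, hZ]; rfl
  have hfi : ∀ (μ : Measure Ω), Integrable t μ → ∀ i, Integrable (fun x => η i * t x i) μ :=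
    fun μ h i => (h.eval i).const_mul (η i)
  have hf : ∀ (μ : Measure Ω), Integrable t μ → Integrable (fun x => ∑ i, η i * t x i) μ :=
    fun μ h => integrable_finsetSum _ (fun i _ => hfi μ h i)
  have hfint : ∀ (μ : Measure Ω), Integrable t μ →
      ∫ x, ∑ i, η i * t x i ∂μ = ∑ i, η i * (∫ x, t x ∂μ) i := by
    intro μ h
    rw [integral_finsetSum _ (fun i _ => hfi μ h i)]
    refine Finset.sum_congr rfl fun i _ => ?_
    rw [integral_const_mul, eval_integral (fun j => h.eval j)]
  have hQBi : Integrable (llr Q B) Q := by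
    by_contra hn
    have : klDiv Q B = ⊤ := if_neg (fun h => hn h.2)
    exact absurd hfin (by simp [this])
  have hPB : P ≪ B := hPt ▸ tilted_absolutelyContinuous B _
  have hBP : B ≪ P := hPt ▸ absolutelyContinuous_tilted hint
  have hllrP : llr P B =ᵐ[P] fun x => ∑ i, η i * t x i - Real.log Z := by
    have h := log_rnDeriv_tilted_left_self (μ := B) hint
    rw [← hPt, ← hZ] at h
    exact hPB.ae_le h
  have hPBi : Integrable (llr P B) P :=
    (integrable_congr hllrP).2 ((hf P htP).sub (integrable_const _))
  have hQPi : Integrable (llr Q P) Q := by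
    rw [hPt]
    exact integrable_llr_tilted_right hQB (hf Q htQ) hQBi hint
  have e1 : klDiv Q B = ((∫ x, llr Q B x ∂Q : ℝ) : EReal) := if_pos ⟨hQB, hQBi⟩
  have e2 : klDiv P B = ((∫ x, llr P B x ∂P : ℝ) : EReal) := if_pos ⟨hPB, hPBi⟩
  have e3 : klDiv Q P = ((∫ x, llr Q P x ∂Q : ℝ) : EReal) := if_pos ⟨hQB.trans hBP, hQPi⟩
  have i2 : ∫ x, llr P B x ∂P = ∫ x, ∑ i, η i * t x i ∂P - Real.log Z := by
    rw [integral_congr_ae hllrP, integral_sub (hf P htP) (integrable_const _)]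
    simp
  have i3 : ∫ x, llr Q P x ∂Q
      = ∫ x, llr Q B x ∂Q - ∫ x, ∑ i, η i * t x i ∂Q + Real.log Z := by
    have h := integral_llr_tilted_right hQB (hf Q htQ) hint hQBi
    rwa [← hPt, ← hZ] at h
  rw [e1, e2, e3, ← EReal.coe_sub, i2, i3, hfint P htP, hfint Q htQ, hmean]
  congr 1
  ring
end

section
/- Let K be a nonempty finite type, d a natural number, t : K → (Fin d → ℝ), and η ∈ (Fin d → ℝ). Define the exponential family probability mass function with uniform base p : K → ℝ by p(x) = exp(⟨η, t(x)⟩) / ∑_{y ∈ K} exp(⟨η, t(y)⟩). Let q : K → ℝ satisfy q(x) ≥ 0 for all x, ∑_{x} q(x) = 1, and ∑_{x} q(x) • t(x) = ∑_{x} p(x) • t(x). Then the Shannon entropy satisfies −∑_{x} q(x) log q(x) ≤ −∑_{x} p(x) log p(x), where 0·log 0 is interpreted as 0. -/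
open Real

/-- The exponential family with uniform base and canonical statistic `t` maximises
Shannon entropy among all probability mass functions with the same expectation of `t`. -/
theorem efu_maximises_shannon_entropy
    {K : Type*} [Fintype K] [Nonempty K]
    (d : ℕ) (t : K → (Fin d → ℝ)) (η : Fin d → ℝ)
    (p : K → ℝ)
    (hp : p = fun x => Real.exp (∑ i, η i * t x i) / ∑ y, Real.exp (∑ i, η i * t y i))
    (q : K → ℝ) (hq0 : ∀ x, 0 ≤ q x) (hq1 : ∑ x, q x = 1)
    (hmom : ∑ x, q x • t x = ∑ x, p x • t x) :
    ∑ x, Real.negMulLog (q x) ≤ ∑ x, Real.negMulLog (p x) := by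
  have hZ : 0 < ∑ y, Real.exp (∑ i, η i * t y i) :=
    Finset.sum_pos (fun y _ => Real.exp_pos _) Finset.univ_nonempty
  set Z := ∑ y, Real.exp (∑ i, η i * t y i) with hZdef
  have hpx : ∀ x, p x = Real.exp (∑ i, η i * t x i) / Z := fun x => by rw [hp]
  have hppos : ∀ x, 0 < p x := fun x => by
    rw [hpx]; exact div_pos (Real.exp_pos _) hZ
  have hp1 : ∑ x, p x = 1 := by
    simp_rw [hpx]
    rw [← Finset.sum_div, ← hZdef, div_self hZ.ne']
  have hlog : ∀ x, Real.log (p x) = ∑ i, η i * t x i - Real.log Z := fun x => by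
    rw [hpx, Real.log_div (Real.exp_pos _).ne' hZ.ne', Real.log_exp]
  have hswap : ∀ r : K → ℝ,
      ∑ x, r x * ∑ i, η i * t x i = ∑ i, η i * (∑ x, r x • t x) i := fun r => by
    simp only [Finset.sum_apply, Pi.smul_apply, smul_eq_mul, Finset.mul_sum]
    rw [Finset.sum_comm]
    refine Finset.sum_congr rfl fun i _ => Finset.sum_congr rfl fun x _ => by ring
  have hcross : ∑ x, q x * Real.log (p x) = ∑ x, p x * Real.log (p x) := by
    simp_rw [hlog, mul_sub, Finset.sum_sub_distrib, ← Finset.sum_mul]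
    rw [hswap q, hswap p, hmom, hq1, hp1]
  have hpt : ∀ x, Real.negMulLog (q x) ≤ -(q x * Real.log (p x)) + (p x - q x) := fun x => by
    rcases (hq0 x).eq_or_lt with h | h
    · rw [← h]; simpa using (hppos x).le
    · have h1 := Real.log_le_sub_one_of_pos (div_pos (hppos x) h)
      rw [Real.log_div (hppos x).ne' h.ne'] at h1
      have h2 := mul_le_mul_of_nonneg_left h1 h.le
      have h3 : q x * (p x / q x - 1) = p x - q x := by field_simp
      rw [h3] at h2
      unfold Real.negMulLog
      linarith
  calc ∑ x, Real.negMulLog (q x)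
      ≤ ∑ x, (-(q x * Real.log (p x)) + (p x - q x)) := Finset.sum_le_sum fun x _ => hpt x
    _ = -∑ x, q x * Real.log (p x) := by
        rw [Finset.sum_add_distrib, Finset.sum_sub_distrib, hp1, hq1, Finset.sum_neg_distrib]
        ring
    _ = ∑ x, Real.negMulLog (p x) := by
        rw [hcross, ← Finset.sum_neg_distrib]
        exact Finset.sum_congr rfl fun x _ => by unfold Real.negMulLog; ring
end

section
/- Let K be a nonempty finite type, d a natural number, t : K → (Fin d → ℝ), and η ∈ (Fin d → ℝ). Define p : K → ℝ by p(x) = exp(⟨η, t(x)⟩) / ∑_{y ∈ K} exp(⟨η, t(y)⟩). Let q : K → ℝ satisfy q(x) ≥ 0 for all x, ∑_{x} q(x) = 1, and ∑_{x} q(x) • t(x) = ∑_{x} p(x) • t(x). If −∑_{x} q(x) log q(x) = −∑_{x} p(x) log p(x), then q = p. -/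
open Real

/-- Uniqueness in the maximum-entropy characterisation of exponential families with
uniform base: any probability mass function with the same expectation of `t` and the
same Shannon entropy as `p` equals `p`. -/
theorem efu_maximises_shannon_entropy_unique
    {K : Type*} [Fintype K] [Nonempty K]
    (d : ℕ) (t : K → (Fin d → ℝ)) (η : Fin d → ℝ)
    (p : K → ℝ)
    (hp : p = fun x => Real.exp (∑ i, η i * t x i) / ∑ y, Real.exp (∑ i, η i * t y i))
    (q : K → ℝ) (hq0 : ∀ x, 0 ≤ q x) (hq1 : ∑ x, q x = 1)
    (hmom : ∑ x, q x • t x = ∑ x, p x • t x)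
    (hent : ∑ x, Real.negMulLog (q x) = ∑ x, Real.negMulLog (p x)) :
    q = p := by
  have hZ : 0 < ∑ y, Real.exp (∑ i, η i * t y i) :=
    Finset.sum_pos (fun y _ => Real.exp_pos _) Finset.univ_nonempty
  have hpx : ∀ x, p x = Real.exp (∑ i, η i * t x i) / ∑ y, Real.exp (∑ i, η i * t y i) :=
    fun x => by rw [hp]
  have hp1 : ∑ x, p x = 1 := by
    simp only [hpx, ← Finset.sum_div]
    exact div_self hZ.ne'
  clear hp
  generalize (∑ y, Real.exp (∑ i, η i * t y i)) = Z at hZ hpx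
  have hppos : ∀ x, 0 < p x := fun x => by rw [hpx]; positivity
  have hlog : ∀ x, Real.log (p x) = (∑ i, η i * t x i) - Real.log Z := fun x => by
    rw [hpx, Real.log_div (Real.exp_pos _).ne' hZ.ne', Real.log_exp]
  have hlin : ∀ r : K → ℝ, ∑ x, r x * Real.log (p x)
      = ∑ i, η i * (∑ x, r x • t x) i - (∑ x, r x) * Real.log Z := by
    intro r
    simp only [hlog, mul_sub, Finset.sum_sub_distrib, Finset.sum_mul, Finset.sum_apply,
      Pi.smul_apply, smul_eq_mul, Finset.mul_sum]
    rw [Finset.sum_comm]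
    congr 1
    exact Finset.sum_congr rfl fun i _ => Finset.sum_congr rfl fun x _ => by ring
  have hcross : ∑ x, q x * Real.log (p x) = ∑ x, p x * Real.log (p x) := by
    rw [hlin, hlin, hmom, hq1, hp1]
  have hterm : ∀ x, p x * InformationTheory.klFun (q x / p x)
      = - Real.negMulLog (q x) - q x * Real.log (p x) + p x - q x := by
    intro x
    have h := (hppos x).ne'
    rw [InformationTheory.klFun_apply, Real.negMulLog]
    rcases (hq0 x).eq_or_lt with h0 | h0
    · simp [← h0]
    · rw [Real.log_div h0.ne' h]
      field_simp
  have hsum : ∑ x, p x * InformationTheory.klFun (q x / p x) = 0 := by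
    simp only [hterm, Finset.sum_sub_distrib, Finset.sum_add_distrib, Finset.sum_neg_distrib]
    rw [hent, hcross, hq1, hp1]
    simp [Real.negMulLog]
  have hnn : ∀ x, 0 ≤ q x / p x := fun x => div_nonneg (hq0 x) (hppos x).le
  rw [Finset.sum_eq_zero_iff_of_nonneg
    (fun x _ => mul_nonneg (hppos x).le (InformationTheory.klFun_nonneg (hnn x)))] at hsum
  funext x
  have h := (mul_eq_zero.mp (hsum x (Finset.mem_univ x))).resolve_left (hppos x).ne'
  rw [InformationTheory.klFun_eq_zero_iff (hnn x), div_eq_one_iff_eq (hppos x).ne'] at h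
  exact h
end

section
/- Let K be a nonempty finite type, d a natural number, t : K → (Fin d → ℝ), and η ∈ (Fin d → ℝ). Define p : K → ℝ by p(x) = exp(⟨η, t(x)⟩) / ∑_{y ∈ K} exp(⟨η, t(y)⟩). Let q : K → ℝ satisfy q(x) ≥ 0 for all x, ∑_{x} q(x) = 1, and ∑_{x} q(x) • t(x) = ∑_{x} p(x) • t(x). Then the cross entropy of q relative to p equals the entropy of p: −∑_{x} q(x) log p(x) = −∑_{x} p(x) log p(x). -/
open Real

/-- For an exponential family with uniform base, the cross entropy of any probability
mass function `q` with the same expectation of `t` relative to `p` equals the Shannon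
entropy of `p`: `H(q,p) = H(p)`. -/
theorem efu_cross_entropy_eq_entropy
    {K : Type*} [Fintype K] [Nonempty K]
    (d : ℕ) (t : K → (Fin d → ℝ)) (η : Fin d → ℝ)
    (p : K → ℝ)
    (hp : p = fun x => Real.exp (∑ i, η i * t x i) / ∑ y, Real.exp (∑ i, η i * t y i))
    (q : K → ℝ) (hq0 : ∀ x, 0 ≤ q x) (hq1 : ∑ x, q x = 1)
    (hmom : ∑ x, q x • t x = ∑ x, p x • t x) :
    -∑ x, q x * Real.log (p x) = -∑ x, p x * Real.log (p x) := by
  have hZ : 0 < ∑ y, Real.exp (∑ i, η i * t y i) :=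
    Finset.sum_pos (fun _ _ => Real.exp_pos _) Finset.univ_nonempty
  have hp1 : ∑ x, p x = 1 := by
    rw [hp, ← Finset.sum_div, div_self hZ.ne']
  have hlog : ∀ x, Real.log (p x) =
      (∑ i, η i * t x i) - Real.log (∑ y, Real.exp (∑ i, η i * t y i)) := by
    intro x
    rw [hp]
    simp only []
    rw [Real.log_div (Real.exp_pos _).ne' hZ.ne', Real.log_exp]
  have key : ∀ r : K → ℝ, ∑ x, r x = 1 → ∑ x, r x * Real.log (p x) =
      (∑ i, η i * (∑ x, r x • t x) i) - Real.log (∑ y, Real.exp (∑ i, η i * t y i)) := by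
    intro r hr
    simp only [hlog, mul_sub, Finset.sum_sub_distrib, ← Finset.sum_mul, hr, one_mul,
      Finset.sum_apply, Pi.smul_apply, smul_eq_mul, Finset.mul_sum]
    rw [Finset.sum_comm]
    congr 1
    exact Finset.sum_congr rfl fun i _ => Finset.sum_congr rfl fun x _ => by ring
  rw [key q hq1, key p hp1, hmom]
end

section
/- Let S be a measurable subset of ℝ, d a natural number, t : ℝ → (Fin d → ℝ) measurable, and η ∈ (Fin d → ℝ). Assume the function x ↦ exp(⟨η, t(x)⟩) restricted to S is integrable with respect to Lebesgue measure with positive integral Z, and define the density p(x) = (indicator of S at x) · exp(⟨η, t(x)⟩)/Z. Let q : ℝ → ℝ be a nonnegative measurable function with ∫ q dλ = 1 and q(x) = 0 for almost every x outside S, such that t·q and t·p are integrable with ∫ t(x) q(x) dx = ∫ t(x) p(x) dx, and such that x ↦ q(x) log q(x) and x ↦ p(x) log p(x) are integrable. Then the differential entropies satisfy −∫ q(x) log q(x) dx ≤ −∫ p(x) log p(x) dx, where 0·log 0 is interpreted as 0. -/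
open MeasureTheory Real

/-- Continuous version: the exponential family density with uniform base on its
support `S` maximises differential entropy among all densities supported on `S`
with the same expectation of the canonical statistic `t`. Integrals are with
respect to Lebesgue measure; `0 · log 0 = 0` holds since `Real.log 0 = 0`. -/
theorem efu_maximises_differential_entropy
    (S : Set ℝ) (hS : MeasurableSet S)
    (d : ℕ) (t : ℝ → (Fin d → ℝ)) (ht : Measurable t) (η : Fin d → ℝ)
    (hint : IntegrableOn (fun x => Real.exp (∑ i, η i * t x i)) S)
    (Z : ℝ) (hZ : Z = ∫ x in S, Real.exp (∑ i, η i * t x i)) (hZpos : 0 < Z)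
    (p : ℝ → ℝ)
    (hp : p = S.indicator (fun x => Real.exp (∑ i, η i * t x i) / Z))
    (q : ℝ → ℝ) (hqmeas : Measurable q) (hq0 : ∀ x, 0 ≤ q x)
    (hq1 : ∫ x, q x = 1)
    (hqS : ∀ᵐ x ∂(volume : Measure ℝ), x ∉ S → q x = 0)
    (htq : Integrable (fun x => q x • t x))
    (htp : Integrable (fun x => p x • t x))
    (hmom : ∫ x, q x • t x = ∫ x, p x • t x)
    (hq_ent : Integrable (fun x => q x * Real.log (q x)))
    (hp_ent : Integrable (fun x => p x * Real.log (p x))) :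
    -∫ x, q x * Real.log (q x) ≤ -∫ x, p x * Real.log (p x) := by
  have hqi : Integrable q := by
    by_contra h
    rw [integral_undef h] at hq1
    exact zero_ne_one hq1
  have hpi : Integrable p := by
    rw [hp, integrable_indicator_iff hS]
    exact hint.div_const Z
  have hp1 : ∫ x, p x = 1 := by
    rw [hp, integral_indicator hS, integral_div, ← hZ, div_self hZpos.ne']
  have key : ∀ f : ℝ → ℝ, Integrable (fun x => f x • t x) →
      Integrable (fun x => f x * ∑ i, η i * t x i) ∧
      ∫ x, f x * ∑ i, η i * t x i = ∑ i, η i * (∫ x, f x • t x) i := by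
    intro f hf
    have hfi : ∀ i, Integrable (fun x => f x * t x i) := fun i => by
      simpa using hf.eval i
    have e : (fun x => f x * ∑ i, η i * t x i) = fun x => ∑ i, η i * (f x * t x i) := by
      funext x
      rw [Finset.mul_sum]
      exact Finset.sum_congr rfl fun i _ => by ring
    rw [e]
    refine ⟨integrable_finsetSum _ fun i _ => (hfi i).const_mul _, ?_⟩
    rw [integral_finsetSum _ fun i _ => (hfi i).const_mul _]
    refine Finset.sum_congr rfl fun i _ => ?_
    rw [integral_const_mul, eval_integral fun i => hf.eval i]
    simp
  obtain ⟨hqu, hqe⟩ := key q htq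
  obtain ⟨hpu, hpe⟩ := key p htp
  have hlog : ∀ x ∈ S, Real.log (p x) = (∑ i, η i * t x i) - Real.log Z := by
    intro x hx
    rw [hp, Set.indicator_of_mem hx, Real.log_div (Real.exp_pos _).ne' hZpos.ne', Real.log_exp]
  have hpp : ∫ x, p x * Real.log (p x) = (∫ x, p x * ∑ i, η i * t x i) - Real.log Z := by
    have : ∀ x, p x * Real.log (p x) = p x * (∑ i, η i * t x i) - p x * Real.log Z := by
      intro x
      by_cases hx : x ∈ S
      · rw [hlog x hx]; ring
      · have : p x = 0 := by rw [hp, Set.indicator_of_notMem hx]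
        simp [this]
    simp_rw [this]
    rw [integral_sub hpu (hpi.mul_const _), integral_mul_const, hp1, one_mul]
  have hle : ∫ x, (q x * (∑ i, η i * t x i) - q x * Real.log Z - (p x - q x))
      ≤ ∫ x, q x * Real.log (q x) := by
    refine integral_mono_ae ((hqu.sub (hqi.mul_const _)).sub (hpi.sub hqi)) hq_ent ?_
    filter_upwards [hqS] with x hx
    by_cases hxS : x ∈ S
    · have hpx : 0 < p x := by
        rw [hp, Set.indicator_of_mem hxS]; positivity
      rcases (hq0 x).eq_or_lt with h | h
      · simp [← h, hpx.le]
      · have h1 := Real.log_le_sub_one_of_pos (div_pos hpx h)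
        rw [Real.log_div hpx.ne' h.ne', hlog x hxS] at h1
        have h2 := mul_le_mul_of_nonneg_left h1 h.le
        have h3 : q x * (p x / q x - 1) = p x - q x := by field_simp
        rw [h3] at h2
        linarith
    · have : p x = 0 := by rw [hp, Set.indicator_of_notMem hxS]
      simp [this, hx hxS]
  have i1 : Integrable (fun x => q x * (∑ i, η i * t x i) - q x * Real.log Z) :=
    hqu.sub (hqi.mul_const _)
  have i2 : Integrable (fun x => p x - q x) := hpi.sub hqi
  rw [integral_sub i1 i2, integral_sub hqu (hqi.mul_const _),
    integral_sub hpi hqi, integral_mul_const, hq1, hp1, hqe, hmom, ← hpe] at hle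
  rw [hpp]
  linarith
end

section
/- Let K be a positive natural number and m : Fin K → ℕ a family of counts, not all zero, with total n = ∑_k m(k) > 0, and set q(k) = m(k)/n. Then, as j → ∞ along the natural numbers, (1/(j·n)) · log( (j·n)! / ∏_k (j·m(k))! ) tends to the Shannon entropy −∑_k q(k) log q(k), where 0·log 0 is interpreted as 0. -/
open Real Filter

/-- Error term in the leading order Stirling formula. -/
noncomputable def stirErr (N : ℕ) : ℝ :=
  Real.log (N.factorial : ℝ) - N * Real.log N + N

lemma stirErr_tendsto : Tendsto (fun N : ℕ => stirErr N / N) atTop (nhds 0) := by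
  have h1 : Tendsto (fun N : ℕ => Real.log (Stirling.stirlingSeq N) * (1 / (N : ℝ))) atTop
      (nhds (Real.log (√π) * 0)) := by
    refine Tendsto.mul ?_ tendsto_one_div_atTop_nhds_zero_nat
    exact (Real.continuousAt_log (by positivity)).tendsto.comp
      Stirling.tendsto_stirlingSeq_sqrt_pi
  have h2 : Tendsto (fun x : ℝ => Real.log x / x) atTop (nhds 0) :=
    Real.isLittleO_log_id_atTop.tendsto_div_nhds_zero
  have h3 : Tendsto (fun N : ℕ => (2 * (N : ℝ))) atTop atTop :=
    tendsto_natCast_atTop_atTop.const_mul_atTop (by norm_num)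
  have h4 := h1.add (h2.comp h3)
  simp only [mul_zero, add_zero] at h4
  refine h4.congr' ?_
  filter_upwards [eventually_gt_atTop 0] with N hN
  have hN' : (N : ℝ) ≠ 0 := by positivity
  simp only [Function.comp, stirErr]
  rw [Stirling.log_stirlingSeq_formula, Real.log_div hN' (Real.exp_ne_zero 1), Real.log_exp]
  field_simp
  ring

lemma stirErr_mul_tendsto (a : ℕ) :
    Tendsto (fun j : ℕ => stirErr (j * a) / j) atTop (nhds 0) := by
  rcases Nat.eq_zero_or_pos a with rfl | ha
  · simp [stirErr]
  · have h1 : Tendsto (fun j : ℕ => j * a) atTop atTop :=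
      tendsto_id.atTop_mul_const' ha
    have h2 := (stirErr_tendsto.comp h1).const_mul (a : ℝ)
    rw [mul_zero] at h2
    refine h2.congr' ?_
    filter_upwards [eventually_gt_atTop 0] with j hj
    have : (j : ℝ) ≠ 0 := by positivity
    have : (a : ℝ) ≠ 0 := by positivity
    simp only [Function.comp]
    push_cast
    field_simp

/-- Boltzmann's combinatorial derivation of Shannon entropy: the normalised logarithm
of the multinomial coefficient (the multiplicity of the macrostate with counts
`j·m(k)`) tends to the Shannon entropy of the frequency vector `q(k) = m(k)/n`
as `j → ∞`. The convention `0 · log 0 = 0` holds since `Real.log 0 = 0`. -/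
theorem log_multinomial_tendsto_entropy
    (K : ℕ) (hK : 0 < K) (m : Fin K → ℕ) (hm : m ≠ 0)
    (n : ℕ) (hn : n = ∑ k, m k) (hnpos : 0 < n)
    (q : Fin K → ℝ) (hq : q = fun k => (m k : ℝ) / (n : ℝ)) :
    Tendsto
      (fun j : ℕ =>
        (1 / ((j : ℝ) * (n : ℝ))) *
          Real.log (Nat.multinomial Finset.univ (fun k => j * m k) : ℝ))
      atTop (nhds (-∑ k, q k * Real.log (q k))) := by
  have hnR : (n : ℝ) ≠ 0 := by positivity
  have hsum : ∑ k, (m k : ℝ) = n := by rw [hn]; push_cast; rfl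
  have hE : Tendsto (fun j : ℕ => (stirErr (j * n) / j - ∑ k, stirErr (j * m k) / j) / (n : ℝ)
      + (-∑ k, q k * Real.log (q k))) atTop (nhds (-∑ k, q k * Real.log (q k))) := by
    have h1 := (((stirErr_mul_tendsto n).sub (tendsto_finsetSum Finset.univ
      (fun k _ => stirErr_mul_tendsto (m k)))).div_const (n : ℝ)).add_const
      (-∑ k, q k * Real.log (q k))
    simpa using h1
  refine hE.congr' ?_
  filter_upwards [eventually_gt_atTop 0] with j hj
  have hjR : (j : ℝ) ≠ 0 := by positivity
  have hlog : Real.log (Nat.multinomial Finset.univ (fun k => j * m k) : ℝ)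
      = Real.log ((j * n).factorial : ℝ) - ∑ k, Real.log ((j * m k).factorial : ℝ) := by
    have h := Nat.multinomial_spec Finset.univ (fun k => j * m k)
    rw [← Finset.mul_sum, ← hn] at h
    have hp : (Nat.multinomial Finset.univ (fun k => j * m k) : ℝ) ≠ 0 := by
      exact_mod_cast (Nat.multinomial_pos _ _).ne'
    rw [← h]
    push_cast
    rw [Real.log_mul (Finset.prod_ne_zero_iff.mpr
      fun k _ => by exact_mod_cast Nat.factorial_ne_zero _) hp,
      Real.log_prod (fun k _ => by exact_mod_cast Nat.factorial_ne_zero _)]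
    ring
  have hfac : ∀ a : ℕ, Real.log ((j * a).factorial : ℝ)
      = stirErr (j * a) + j * (a * Real.log a) + (j * Real.log j - j) * a := by
    intro a
    rcases Nat.eq_zero_or_pos a with rfl | ha
    · simp [stirErr]
    · have : (a : ℝ) ≠ 0 := by positivity
      simp only [stirErr]
      push_cast
      rw [Real.log_mul hjR this]
      ring
  have hent : ∑ k, q k * Real.log (q k)
      = (∑ k, (m k : ℝ) * Real.log (m k)) / n - Real.log n := by
    have : ∀ k, q k * Real.log (q k)
        = (m k : ℝ) * Real.log (m k) / n - m k * (Real.log n / n) := by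
      intro k
      rw [hq]
      rcases Nat.eq_zero_or_pos (m k) with h0 | ha
      · simp [h0]
      · have : (m k : ℝ) ≠ 0 := by positivity
        simp only
        rw [Real.log_div this hnR]
        ring
    rw [Finset.sum_congr rfl (fun k _ => this k), Finset.sum_sub_distrib, ← Finset.sum_mul,
      hsum, Finset.sum_div]
    field_simp
  rw [hlog, hent, hfac n, Finset.sum_congr rfl (fun k _ => hfac (m k)),
    Finset.sum_add_distrib, Finset.sum_add_distrib, ← Finset.mul_sum, ← Finset.mul_sum, hsum,
    ← Finset.sum_div]
  field_simp
  ring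
end
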